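/- arXiv:math/0701800 — 2 statements merged into one kernel-verified Lean document; each statement's English description precedes it below -/
import Mathlib

section
/- Let t be a real number with 0 < t ≤ 1/3. Define Y : ℝ → ℝ by Y(y) = y(1 − √(1 − 4t²(1+y²)))/(2t(1+y²)) and set yₙ = Y⁽ⁿ⁾(1), the n-fold iterate of Y evaluated at 1. Then for every n ≥ 0 one has 0 < y_{n+1} ≤ yₙ ≤ 1, and for every n ≥ 1 one has 1/y_{n+1} = 1/(t·yₙ) − 1/y_{n−1}. -/
/-!
Since `K(x, y) = xy - t(x²y² + x² + y²)` is symmetric, both `yₙ₋₁` and `yₙ₊₁ = Y(yₙ)` are roots of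
`K(yₙ, ·)`. As `yₙ ≤ yₙ₋₁` and `2t ≤ 1`, the root `yₙ₋₁` is the large one, so the two roots are
complementary, and by Vieta the sum of their reciprocals is `1 / (t yₙ)`.
-/

/-- The kernel `xy (1 - t ∑_{(i, j) ∈ S} xⁱyʲ)` of the quarter-plane walks with step set
`S = {(1,1), (-1,1), (1,-1)}`, written as a polynomial. -/
def walkKernel (t x y : ℝ) : ℝ :=
  x * y - t * (x ^ 2 * y ^ 2 + x ^ 2 + y ^ 2)

/-- The small root of `walkKernel t y`, given by the quadratic formula. It has this meaning only
when `t ≠ 0` and `4 * t ^ 2 * (1 + y ^ 2) ≤ 1`: outside this range, the division or the square root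
takes the junk value `0`. -/
noncomputable def kernelRoot (t y : ℝ) : ℝ :=
  y * (1 - √(1 - 4 * t ^ 2 * (1 + y ^ 2))) / (2 * t * (1 + y ^ 2))

section

variable {t y : ℝ}

theorem walkKernel_comm (t x y : ℝ) : walkKernel t x y = walkKernel t y x := by
  unfold walkKernel
  ring

theorem kernelRoot_eq_div_one_add_sqrt (h : 4 * t ^ 2 * (1 + y ^ 2) ≤ 1) :
    kernelRoot t y = 2 * t * y / (1 + √(1 - 4 * t ^ 2 * (1 + y ^ 2))) := by
  obtain rfl | ht := eq_or_ne t 0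
  · simp [kernelRoot]
  have hsq := Real.sq_sqrt (sub_nonneg.2 h)
  rw [kernelRoot, div_eq_div_iff (by positivity) (by positivity)]
  linear_combination (-y) * hsq

theorem walkKernel_kernelRoot (h : 4 * t ^ 2 * (1 + y ^ 2) ≤ 1) :
    walkKernel t y (kernelRoot t y) = 0 := by
  have hsq := Real.sq_sqrt (sub_nonneg.2 h)
  have hpos : 0 < 1 + √(1 - 4 * t ^ 2 * (1 + y ^ 2)) := by positivity
  rw [walkKernel, kernelRoot_eq_div_one_add_sqrt h]
  generalize √(1 - 4 * t ^ 2 * (1 + y ^ 2)) = s at *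
  field_simp
  linear_combination -t * y ^ 2 * hsq

theorem kernelRoot_pos (ht : 0 < t) (hy : 0 < y) (h : 4 * t ^ 2 * (1 + y ^ 2) ≤ 1) :
    0 < kernelRoot t y := by
  rw [kernelRoot_eq_div_one_add_sqrt h]
  positivity

theorem two_mul_le_one_of_discrim_nonneg (h : 4 * t ^ 2 * (1 + y ^ 2) ≤ 1) : 2 * t ≤ 1 := by
  have hsq : (2 * t) ^ 2 ≤ 1 := by nlinarith [sq_nonneg (t * y)]
  exact (abs_le.1 ((sq_le_one_iff_abs_le_one _).1 hsq)).2

theorem kernelRoot_le_self (hy : 0 ≤ y) (h : 4 * t ^ 2 * (1 + y ^ 2) ≤ 1) :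
    kernelRoot t y ≤ y := by
  rw [kernelRoot_eq_div_one_add_sqrt h, div_le_iff₀ (by positivity), mul_comm]
  gcongr
  linarith [two_mul_le_one_of_discrim_nonneg h, Real.sqrt_nonneg (1 - 4 * t ^ 2 * (1 + y ^ 2))]

theorem discrim_eq_sq_of_walkKernel_eq_zero {w : ℝ} (hw : w ≠ 0) (hK : walkKernel t y w = 0) :
    1 - 4 * t ^ 2 * (1 + y ^ 2) = (1 - 2 * t * (y / w)) ^ 2 := by
  unfold walkKernel at hK
  field_simp
  linear_combination 4 * t * hK

/-- The inequality `2 * t * (y / w) ≤ 1` singles out `w` as the large root of `walkKernel t y`. -/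
theorem one_div_kernelRoot_add_one_div {w : ℝ} (ht : t ≠ 0) (hy : y ≠ 0) (hw : w ≠ 0)
    (hK : walkKernel t y w = 0) (hlarge : 2 * t * (y / w) ≤ 1) :
    1 / kernelRoot t y + 1 / w = 1 / (t * y) := by
  have hdiscr := discrim_eq_sq_of_walkKernel_eq_zero hw hK
  have hsqrt : √(1 - 4 * t ^ 2 * (1 + y ^ 2)) = 1 - 2 * t * (y / w) := by
    rw [hdiscr, Real.sqrt_sq (sub_nonneg.2 hlarge)]
  have hreal : 4 * t ^ 2 * (1 + y ^ 2) ≤ 1 := sub_nonneg.1 (hdiscr ▸ sq_nonneg _)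
  rw [kernelRoot_eq_div_one_add_sqrt hreal, hsqrt, one_div_div]
  field_simp
  ring

theorem one_div_kernelRoot_kernelRoot (ht : 0 < t) (hy : 0 < y)
    (h : 4 * t ^ 2 * (1 + y ^ 2) ≤ 1) :
    1 / kernelRoot t (kernelRoot t y) = 1 / (t * kernelRoot t y) - 1 / y := by
  have hpos := kernelRoot_pos ht hy h
  have hratio : kernelRoot t y / y ≤ 1 := (div_le_one hy).2 (kernelRoot_le_self hy.le h)
  have hlarge : 2 * t * (kernelRoot t y / y) ≤ 1 :=
    mul_le_one₀ (two_mul_le_one_of_discrim_nonneg h) (by positivity) hratio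
  have hK : walkKernel t (kernelRoot t y) y = 0 := by
    rw [walkKernel_comm, walkKernel_kernelRoot h]
  exact eq_sub_of_add_eq (one_div_kernelRoot_add_one_div ht.ne' hpos.ne' hy.ne' hK hlarge)

theorem discrim_nonneg_of_mem_Ioc {x : ℝ} (hx : x ∈ Set.Ioc 0 y)
    (h : 4 * t ^ 2 * (1 + y ^ 2) ≤ 1) : 4 * t ^ 2 * (1 + x ^ 2) ≤ 1 := by
  refine le_trans ?_ h
  gcongr
  exacts [hx.1.le, hx.2]

theorem mapsTo_kernelRoot_Ioc (ht : 0 < t) (h : 4 * t ^ 2 * (1 + y ^ 2) ≤ 1) :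
    Set.MapsTo (kernelRoot t) (Set.Ioc 0 y) (Set.Ioc 0 y) := fun _ hx ↦
  have hx' := discrim_nonneg_of_mem_Ioc hx h
  ⟨kernelRoot_pos ht hx.1 hx', (kernelRoot_le_self hx.1.le hx').trans hx.2⟩

end

theorem stmt_2_general (t y₀ : ℝ) (ht : 0 < t) (hy₀ : 0 < y₀) (h : 4 * t ^ 2 * (1 + y₀ ^ 2) ≤ 1)
    (Y : ℝ → ℝ)
    (hY : ∀ y, Y y = y * (1 - Real.sqrt (1 - 4 * t ^ 2 * (1 + y ^ 2))) / (2 * t * (1 + y ^ 2))) :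
    (∀ n : ℕ, 0 < Y^[n + 1] y₀ ∧ Y^[n + 1] y₀ ≤ Y^[n] y₀ ∧ Y^[n] y₀ ≤ y₀) ∧
    (∀ n : ℕ, 1 ≤ n →
      1 / Y^[n + 1] y₀ = 1 / (t * Y^[n] y₀) - 1 / Y^[n - 1] y₀) := by
  obtain rfl : Y = kernelRoot t := funext hY
  have hmem (n : ℕ) : (kernelRoot t)^[n] y₀ ∈ Set.Ioc 0 y₀ :=
    (mapsTo_kernelRoot_Ioc ht h).iterate n ⟨hy₀, le_rfl⟩
  have hreal (n : ℕ) := discrim_nonneg_of_mem_Ioc (hmem n) h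
  refine ⟨fun n ↦ ⟨(hmem (n + 1)).1, ?_, (hmem n).2⟩, fun n hn ↦ ?_⟩
  · rw [Function.iterate_succ_apply']
    exact kernelRoot_le_self (hmem n).1.le (hreal n)
  · obtain ⟨m, rfl⟩ := Nat.exists_eq_add_of_le' hn
    simp only [Function.iterate_succ_apply', Nat.add_sub_cancel]
    exact one_div_kernelRoot_kernelRoot ht (hmem m).1 (hreal m)

theorem stmt_2 (t : ℝ) (ht : 0 < t) (ht3 : t ≤ 1 / 3) (Y : ℝ → ℝ)
    (hY : ∀ y, Y y = y * (1 - Real.sqrt (1 - 4 * t ^ 2 * (1 + y ^ 2))) / (2 * t * (1 + y ^ 2))) :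
    (∀ n : ℕ, 0 < Y^[n + 1] 1 ∧ Y^[n + 1] 1 ≤ Y^[n] 1 ∧ Y^[n] 1 ≤ 1) ∧
    (∀ n : ℕ, 1 ≤ n →
      1 / Y^[n + 1] 1 = 1 / (t * Y^[n] 1) - 1 / Y^[n - 1] 1) :=
  stmt_2_general t 1 ht one_pos (by nlinarith) Y hY
end

section
/- Let S = {(1,1), (−1,1), (1,−1)} ⊂ ℤ². Let cₙ be the number of quarter-plane walks of length n with steps S. Let t be real with 0 < t < 1/3, define Y : ℝ → ℝ by Y(y) = y(1 − √(1 − 4t²(1+y²)))/(2t(1+y²)) and yₙ = Y⁽ⁿ⁾(1). Then the series ∑_{n≥0} cₙ tⁿ and ∑_{n≥0} (−1)ⁿ yₙ y_{n+1} converge, and ∑_{n≥0} cₙ tⁿ = (1 − 2∑_{n≥0} (−1)ⁿ yₙ y_{n+1})/(1 − 3t). -/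
/-- The step set S = {(1,1), (−1,1), (1,−1)}. -/
def stepsS : Set (ℤ × ℤ) := {(1, 1), (-1, 1), (1, -1)}

/-- A quarter-plane walk of length `n` with steps from `S`. -/
def IsQuarterWalk (S : Set (ℤ × ℤ)) (n : ℕ) (p : Fin (n + 1) → ℤ × ℤ) : Prop :=
  p 0 = (0, 0) ∧
  (∀ k : Fin n, p k.succ - p k.castSucc ∈ S) ∧
  (∀ k : Fin (n + 1), 0 ≤ (p k).1 ∧ 0 ≤ (p k).2)

/-- The number of quarter-plane walks of length `n` with steps `S`. -/
noncomputable def numWalks (n : ℕ) : ℕ :=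
  Nat.card {p : Fin (n + 1) → ℤ × ℤ // IsQuarterWalk stepsS n p}

/-!
This is the iterated kernel method. Appending a step to a walk gives the functional equation
`K(x, y) G(x, y) = x y - t x² G(x, 0) - t y² G(y, 0)` for the generating function `G` of walks by
length and endpoint, where `K` is the kernel. Along the iterates `yₙ` of the small root of `K`
the left-hand side vanishes, so `yₙ yₙ₊₁ = bₙ + bₙ₊₁` with `bₙ = t yₙ² G(yₙ, 0)`. As `yₙ` decays
geometrically, the alternating sum of these products telescopes to `b₀ = t G(1, 0)`, and the
functional equation at `(1, 1)` reads `(1 - 3 t) G(1, 1) = 1 - 2 t G(1, 0)`.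
-/

/-- Quarter-plane walks of length `n` with steps in the finite set `S`. -/
def QuarterWalk (S : Finset (ℤ × ℤ)) (n : ℕ) : Type :=
  {p : Fin (n + 1) → ℤ × ℤ // IsQuarterWalk (S : Set (ℤ × ℤ)) n p}

section IsQuarterWalk

variable {S : Set (ℤ × ℤ)} {n : ℕ}

theorem isQuarterWalk_zero_iff {p : Fin 1 → ℤ × ℤ} : IsQuarterWalk S 0 p ↔ p = 0 := by
  constructor
  · rintro ⟨h_start, -, -⟩
    funext k
    rw [Subsingleton.elim k 0]
    exact h_start
  · rintro rfl
    exact ⟨rfl, fun k ↦ k.elim0, fun _ ↦ ⟨le_rfl, le_rfl⟩⟩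

theorem isQuarterWalk_snoc_iff {p : Fin (n + 1) → ℤ × ℤ} {q : ℤ × ℤ} :
    IsQuarterWalk S (n + 1) (Fin.snoc p q : Fin (n + 2) → ℤ × ℤ) ↔
      IsQuarterWalk S n p ∧ q - p (Fin.last n) ∈ S ∧ 0 ≤ q := by
  simp only [IsQuarterWalk, Fin.forall_fin_succ' (n := n), Fin.forall_fin_succ' (n := n + 1),
    Fin.succ_castSucc, Fin.succ_last, Fin.snoc_castSucc, Fin.snoc_last, ← Fin.castSucc_zero,
    Prod.le_def, Prod.fst_zero, Prod.snd_zero]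
  tauto

theorem isQuarterWalk_succ_iff {p : Fin (n + 2) → ℤ × ℤ} :
    IsQuarterWalk S (n + 1) p ↔ IsQuarterWalk S n (Fin.init p) ∧
      p (Fin.last (n + 1)) - p (Fin.last n).castSucc ∈ S ∧ 0 ≤ p (Fin.last (n + 1)) := by
  conv_lhs => rw [← Fin.snoc_init_self p]
  exact isQuarterWalk_snoc_iff

theorem IsQuarterWalk.swap {p : Fin (n + 1) → ℤ × ℤ} (hS : ∀ v ∈ S, v.swap ∈ S)
    (hp : IsQuarterWalk S n p) : IsQuarterWalk S n (Prod.swap ∘ p) :=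
  ⟨congrArg Prod.swap hp.1, fun k ↦ hS _ (hp.2.1 k), fun k ↦ (hp.2.2 k).symm⟩

end IsQuarterWalk

namespace QuarterWalk

variable {S : Finset (ℤ × ℤ)} {n : ℕ}

/-- The last point of a walk. -/
def endpoint (w : QuarterWalk S n) : ℤ × ℤ := w.1 (Fin.last n)

theorem endpoint_nonneg (w : QuarterWalk S n) : 0 ≤ w.endpoint := w.2.2.2 (Fin.last n)

instance : Unique (QuarterWalk S 0) where
  default := ⟨0, isQuarterWalk_zero_iff.2 rfl⟩
  uniq w := Subtype.ext (isQuarterWalk_zero_iff.1 w.2)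

theorem endpoint_eq_zero (w : QuarterWalk S 0) : w.endpoint = 0 := w.2.1

/-- A walk of length `n + 1` is a walk of length `n` followed by a step that stays in the
quarter plane. -/
def snocEquiv (S : Finset (ℤ × ℤ)) (n : ℕ) :
    (Σ w : QuarterWalk S n, {v // v ∈ S.filter (0 ≤ w.endpoint + ·)}) ≃
      QuarterWalk S (n + 1) where
  toFun w := ⟨Fin.snoc w.1.1 (w.1.endpoint + w.2.1), isQuarterWalk_snoc_iff.2
    ⟨w.1.2, by simpa [endpoint] using (Finset.mem_filter.1 w.2.2).1,
      (Finset.mem_filter.1 w.2.2).2⟩⟩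
  invFun w :=
    have hw := isQuarterWalk_succ_iff.1 w.2
    ⟨⟨Fin.init w.1, hw.1⟩, ⟨w.1 (Fin.last (n + 1)) - w.1 (Fin.last n).castSucc,
      Finset.mem_filter.2 ⟨hw.2.1, by simpa [endpoint, Fin.init] using hw.2.2⟩⟩⟩
  left_inv w := Sigma.subtype_ext (Subtype.ext (by simp)) (by simp [endpoint])
  right_inv w := Subtype.ext (by simp [endpoint, Fin.init])

theorem endpoint_snocEquiv
    (w : Σ w : QuarterWalk S n, {v // v ∈ S.filter (0 ≤ w.endpoint + ·)}) :
    (snocEquiv S n w).endpoint = w.1.endpoint + w.2 :=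
  Fin.snoc_last (α := fun _ ↦ ℤ × ℤ) _ _

instance : Finite (QuarterWalk S n) := by
  induction n with
  | zero => infer_instance
  | succ n ih => exact Finite.of_equiv _ (snocEquiv S n)

noncomputable instance : Fintype (QuarterWalk S n) := Fintype.ofFinite _

theorem sum_endpoint_succ {M : Type*} [AddCommMonoid M] (f : ℤ × ℤ → M) :
    ∑ w : QuarterWalk S (n + 1), f w.endpoint =
      ∑ w : QuarterWalk S n, ∑ v ∈ S with 0 ≤ w.endpoint + v, f (w.endpoint + v) := by
  simp only [← (snocEquiv S n).sum_comp, endpoint_snocEquiv, Fintype.sum_sigma]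
  exact Finset.sum_congr rfl fun w _ ↦ Finset.sum_coe_sort _ fun v ↦ f (w.endpoint + v)

theorem card_le (S : Finset (ℤ × ℤ)) (n : ℕ) : Fintype.card (QuarterWalk S n) ≤ S.card ^ n := by
  induction n with
  | zero => simp
  | succ n ih =>
    calc Fintype.card (QuarterWalk S (n + 1))
        = ∑ w : QuarterWalk S n, (S.filter (0 ≤ w.endpoint + ·)).card := by
          simpa using sum_endpoint_succ (S := S) (n := n) fun _ ↦ (1 : ℕ)
      _ ≤ ∑ _w : QuarterWalk S n, S.card :=
          Finset.sum_le_sum fun w _ ↦ Finset.card_filter_le _ _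
      _ = Fintype.card (QuarterWalk S n) * S.card := by simp
      _ ≤ S.card ^ (n + 1) := by rw [pow_succ]; gcongr

/-- The reflection of walks in the diagonal. -/
def swapEquiv (hS : ∀ v ∈ S, v.swap ∈ S) (n : ℕ) : QuarterWalk S n ≃ QuarterWalk S n :=
  Function.Involutive.toPerm (fun w ↦ ⟨Prod.swap ∘ w.1, w.2.swap hS⟩) fun _ ↦ rfl

theorem endpoint_swapEquiv (hS : ∀ v ∈ S, v.swap ∈ S) (w : QuarterWalk S n) :
    (swapEquiv hS n w).endpoint = w.endpoint.swap := rfl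

end QuarterWalk

/-- The polynomial `∑ x ^ i * y ^ j` over the walks of length `n`, where `(i, j)` is the endpoint
of the walk. -/
noncomputable def endpointPoly {R : Type*} [CommSemiring R] (S : Finset (ℤ × ℤ)) (n : ℕ)
    (x y : R) : R :=
  ∑ w : QuarterWalk S n, x ^ w.endpoint.1.toNat * y ^ w.endpoint.2.toNat

section endpointPoly

variable {R : Type*} {S : Finset (ℤ × ℤ)} {n : ℕ}

theorem endpointPoly_zero [CommSemiring R] (x y : R) : endpointPoly S 0 x y = 1 := by
  simp [endpointPoly, QuarterWalk.endpoint_eq_zero]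

theorem endpointPoly_one_one [CommSemiring R] :
    endpointPoly S n (1 : R) 1 = Fintype.card (QuarterWalk S n) := by
  simp [endpointPoly]

theorem endpointPoly_comm [CommSemiring R] (hS : ∀ v ∈ S, v.swap ∈ S) (x y : R) :
    endpointPoly S n x y = endpointPoly S n y x := by
  rw [endpointPoly, ← (QuarterWalk.swapEquiv hS n).sum_comp, endpointPoly]
  simp only [QuarterWalk.endpoint_swapEquiv, Prod.fst_swap, Prod.snd_swap, mul_comm]

theorem norm_endpointPoly_le [SeminormedCommRing R] [NormOneClass R] {x y : R} (hx : ‖x‖ ≤ 1)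
    (hy : ‖y‖ ≤ 1) : ‖endpointPoly S n x y‖ ≤ S.card ^ n := by
  have norm_pow_le_one {z : R} (hz : ‖z‖ ≤ 1) (k : ℕ) : ‖z ^ k‖ ≤ 1 :=
    (norm_pow_le z k).trans (pow_le_one₀ (norm_nonneg z) hz)
  calc ‖endpointPoly S n x y‖
      ≤ ∑ _w : QuarterWalk S n, (1 : ℝ) := norm_sum_le_of_le _ fun w _ ↦
        (norm_mul_le _ _).trans <| mul_le_one₀ (norm_pow_le_one hx _) (norm_nonneg _)
          (norm_pow_le_one hy _)
    _ = Fintype.card (QuarterWalk S n) := by simp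
    _ ≤ S.card ^ n := mod_cast QuarterWalk.card_le S n

end endpointPoly

/-- The generating function `∑ t ^ n * x ^ i * y ^ j` of the walks with steps in `S`, counted by
length `n` and endpoint `(i, j)`. -/
noncomputable def walkGF {𝕜 : Type*} [NormedField 𝕜] (S : Finset (ℤ × ℤ)) (t x y : 𝕜) : 𝕜 :=
  ∑' n, endpointPoly S n x y * t ^ n

section walkGF

variable {𝕜 : Type*} [NormedField 𝕜] {S : Finset (ℤ × ℤ)} {t x y : 𝕜}

theorem walkGF_comm (hS : ∀ v ∈ S, v.swap ∈ S) (t x y : 𝕜) :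
    walkGF S t x y = walkGF S t y x := by
  simp only [walkGF, endpointPoly_comm hS x y]

theorem norm_endpointPoly_mul_pow_le (hx : ‖x‖ ≤ 1) (hy : ‖y‖ ≤ 1) (n : ℕ) :
    ‖endpointPoly S n x y * t ^ n‖ ≤ (S.card * ‖t‖) ^ n := by
  rw [norm_mul, norm_pow, mul_pow]
  gcongr
  exact norm_endpointPoly_le hx hy

theorem norm_walkGF_le (ht : S.card * ‖t‖ < 1) (hx : ‖x‖ ≤ 1) (hy : ‖y‖ ≤ 1) :
    ‖walkGF S t x y‖ ≤ (1 - S.card * ‖t‖)⁻¹ :=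
  tsum_of_norm_bounded (hasSum_geometric_of_lt_one (by positivity) ht)
    (norm_endpointPoly_mul_pow_le hx hy)

theorem hasSum_walkGF [CompleteSpace 𝕜] (ht : S.card * ‖t‖ < 1) (hx : ‖x‖ ≤ 1)
    (hy : ‖y‖ ≤ 1) : HasSum (fun n ↦ endpointPoly S n x y * t ^ n) (walkGF S t x y) :=
  (Summable.of_norm_bounded (summable_geometric_of_lt_one (by positivity) ht)
    (norm_endpointPoly_mul_pow_le hx hy)).hasSum

end walkGF

/-- The set `stepsS` as a `Finset`. -/
def steps : Finset (ℤ × ℤ) := {(1, 1), (-1, 1), (1, -1)}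

theorem coe_steps : (steps : Set (ℤ × ℤ)) = stepsS := by simp [steps, stepsS]

theorem card_steps_mul_lt_one {r : ℝ} (hr : r < 1 / 3) : steps.card * r < 1 := by
  rw [show steps.card = 3 from rfl, Nat.cast_ofNat]
  linarith

theorem swap_mem_steps : ∀ v ∈ steps, v.swap ∈ steps := by decide

theorem numWalks_eq_card (n : ℕ) : numWalks n = Fintype.card (QuarterWalk steps n) := by
  rw [numWalks, ← coe_steps, ← Nat.card_eq_fintype_card, QuarterWalk]

/-- The kernel `x * y - t * x * y * (x * y + x / y + y / x)` of the step set. -/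
def kernel {R : Type*} [CommRing R] (t x y : R) : R :=
  x * y - t * (x ^ 2 * y ^ 2 + x ^ 2 + y ^ 2)

section FunctionalEquation

theorem sum_steps_filter_nonneg {M : Type*} [AddCommMonoid M] (f : ℤ × ℤ → M) {i j : ℤ}
    (hi : 0 ≤ i) (hj : 0 ≤ j) :
    ∑ v ∈ steps with 0 ≤ (i, j) + v, f ((i, j) + v) =
      f (i + 1, j + 1) + ((if i = 0 then 0 else f (i - 1, j + 1)) +
        if j = 0 then 0 else f (i + 1, j - 1)) := by
  have h_diag : 0 ≤ (i + 1, j + 1) := Prod.le_def.2 ⟨by positivity, by positivity⟩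
  have h_left : 0 ≤ (i - 1, j + 1) ↔ i ≠ 0 := by
    simp only [Prod.le_def, Prod.fst_zero, Prod.snd_zero]
    omega
  have h_down : 0 ≤ (i + 1, j - 1) ↔ j ≠ 0 := by
    simp only [Prod.le_def, Prod.fst_zero, Prod.snd_zero]
    omega
  rw [Finset.sum_filter, steps, Finset.sum_insert (by decide), Finset.sum_insert (by decide),
    Finset.sum_singleton]
  simp only [Prod.mk_add_mk, ← sub_eq_add_neg, if_pos h_diag, h_left, h_down, ite_not]

-- The subtracted terms are the steps `(1, -1)` from `q.2 = 0` and `(-1, 1)` from `q.1 = 0`;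
-- the powers of `0` are `1` there and `0` elsewhere.
theorem mul_sum_steps_monomial {R : Type*} [CommRing R] (x y : R) {q : ℤ × ℤ} (hq : 0 ≤ q) :
    x * y * ∑ v ∈ steps with 0 ≤ q + v, x ^ (q + v).1.toNat * y ^ (q + v).2.toNat =
      (x ^ 2 * y ^ 2 + x ^ 2 + y ^ 2) * (x ^ q.1.toNat * y ^ q.2.toNat)
        - x ^ 2 * (x ^ q.1.toNat * 0 ^ q.2.toNat) - y ^ 2 * (0 ^ q.1.toNat * y ^ q.2.toNat) := by
  obtain ⟨i, j⟩ := q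
  obtain ⟨hi, hj⟩ : 0 ≤ i ∧ 0 ≤ j := hq
  lift i to ℕ using hi
  lift j to ℕ using hj
  have toNat_sub_one (k : ℕ) : ((k : ℤ) - 1).toNat = k - 1 := by omega
  rw [sum_steps_filter_nonneg (fun q ↦ x ^ q.1.toNat * y ^ q.2.toNat) (Int.natCast_nonneg i)
    (Int.natCast_nonneg j)]
  simp only [Int.toNat_natCast, Int.toNat_natCast_add_one, toNat_sub_one, Nat.cast_eq_zero]
  rcases i with _ | i <;> rcases j with _ | j <;>
    simp only [if_true, if_false, Nat.succ_ne_zero, Nat.add_sub_cancel, zero_pow, ne_eq,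
      not_false_eq_true, pow_zero] <;> ring

theorem mul_endpointPoly_steps_succ {R : Type*} [CommRing R] (n : ℕ) (x y : R) :
    x * y * endpointPoly steps (n + 1) x y =
      (x ^ 2 * y ^ 2 + x ^ 2 + y ^ 2) * endpointPoly steps n x y
        - x ^ 2 * endpointPoly steps n x 0 - y ^ 2 * endpointPoly steps n 0 y := by
  rw [endpointPoly,
    QuarterWalk.sum_endpoint_succ fun q ↦ x ^ q.1.toNat * y ^ q.2.toNat, Finset.mul_sum]
  simp only [mul_sum_steps_monomial x y (QuarterWalk.endpoint_nonneg _), Finset.sum_sub_distrib,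
    ← Finset.mul_sum, endpointPoly]

variable {𝕜 : Type*} [NormedField 𝕜] [CompleteSpace 𝕜] {t x y : 𝕜}

theorem kernel_mul_walkGF (ht : steps.card * ‖t‖ < 1) (hx : ‖x‖ ≤ 1) (hy : ‖y‖ ≤ 1) :
    kernel t x y * walkGF steps t x y =
      x * y - t * x ^ 2 * walkGF steps t x 0 - t * y ^ 2 * walkGF steps t y 0 := by
  have h0 : ‖(0 : 𝕜)‖ ≤ 1 := by simp
  have h_xy := hasSum_walkGF ht hx hy
  have h_tail : HasSum (fun n ↦ x * y * (endpointPoly steps (n + 1) x y * t ^ (n + 1)))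
      (x * y * (walkGF steps t x y - 1)) := by
    refine HasSum.mul_left _ ?_
    simpa [endpointPoly_zero] using (hasSum_nat_add_iff' 1).2 h_xy
  have h_step : HasSum (fun n ↦ x * y * (endpointPoly steps (n + 1) x y * t ^ (n + 1)))
      (t * (x ^ 2 * y ^ 2 + x ^ 2 + y ^ 2) * walkGF steps t x y
        - t * x ^ 2 * walkGF steps t x 0 - t * y ^ 2 * walkGF steps t 0 y) := by
    refine ((h_xy.mul_left _).sub ((hasSum_walkGF ht hx h0).mul_left _)).sub
      ((hasSum_walkGF ht h0 hy).mul_left _) |>.congr_fun fun n ↦ ?_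
    linear_combination t ^ (n + 1) * mul_endpointPoly_steps_succ n x y
  rw [walkGF_comm swap_mem_steps t y 0, kernel]
  linear_combination h_tail.unique h_step

end FunctionalEquation

section KernelMethod

theorem hasSum_neg_one_pow_mul_add_succ {R : Type*} [Ring R] [TopologicalSpace R]
    [IsTopologicalAddGroup R] {b : ℕ → R} (hb : Summable fun n ↦ (-1) ^ n * b n) :
    HasSum (fun n ↦ (-1) ^ n * (b n + b (n + 1))) (b 0) := by
  simpa [pow_succ, mul_add] using hb.hasSum.sub ((hasSum_nat_add_iff' 1).2 hb.hasSum)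

variable {𝕜 : Type*} [NormedField 𝕜] [CompleteSpace 𝕜] {t : 𝕜}

theorem hasSum_neg_one_pow_mul_of_kernel_eq_zero (ht : steps.card * ‖t‖ < 1) {y : ℕ → 𝕜}
    (hy : ∀ n, ‖y n‖ ≤ 1) (hy_sum : Summable fun n ↦ ‖y n‖)
    (h_kernel : ∀ n, kernel t (y n) (y (n + 1)) = 0) :
    HasSum (fun n ↦ (-1) ^ n * y n * y (n + 1)) (t * y 0 ^ 2 * walkGF steps t (y 0) 0) := by
  set b : ℕ → 𝕜 := fun n ↦ t * y n ^ 2 * walkGF steps t (y n) 0 with hb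
  have h_add (n : ℕ) : y n * y (n + 1) = b n + b (n + 1) := by
    have h := kernel_mul_walkGF ht (hy n) (hy (n + 1))
    rw [h_kernel, zero_mul] at h
    linear_combination -h
  have h_bound (n : ℕ) : ‖(-1) ^ n * b n‖ ≤ ‖y n‖ * (‖t‖ * (1 - steps.card * ‖t‖)⁻¹) := by
    have h_sq : ‖y n‖ ^ 2 ≤ ‖y n‖ := pow_le_of_le_one (norm_nonneg _) (hy n) two_ne_zero
    have h_GF := norm_walkGF_le ht (hy n) (y := 0) (by simp)
    calc ‖(-1) ^ n * b n‖ = ‖y n‖ ^ 2 * (‖t‖ * ‖walkGF steps t (y n) 0‖) := by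
          simp only [hb, norm_mul, norm_pow, norm_neg, norm_one, one_pow, one_mul]
          ring
      _ ≤ ‖y n‖ * (‖t‖ * (1 - steps.card * ‖t‖)⁻¹) := by gcongr
  have h_b : Summable fun n ↦ (-1) ^ n * b n := .of_norm_bounded (hy_sum.mul_right _) h_bound
  refine (hasSum_neg_one_pow_mul_add_succ h_b).congr_fun fun n ↦ ?_
  rw [mul_assoc, h_add]

end KernelMethod

section kernelRoot

variable {t y : ℝ}

theorem abs_one_sub_sqrt_one_sub_le {u : ℝ} (hu : 0 ≤ u) : |1 - √(1 - u)| ≤ u := by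
  have h_le_one : √(1 - u) ≤ 1 := Real.sqrt_le_one.2 (by linarith)
  have h_ge : 1 - u ≤ √(1 - u) := Real.le_sqrt_self_iff.2 (sub_le_self 1 hu)
  rw [abs_of_nonneg (by linarith)]
  linarith

theorem abs_kernelRoot_le (t y : ℝ) : |kernelRoot t y| ≤ 2 * |t| * |y| := by
  rcases eq_or_ne t 0 with rfl | ht
  · simp [kernelRoot]
  calc |kernelRoot t y|
      = |y| * |1 - √(1 - 4 * t ^ 2 * (1 + y ^ 2))| / (2 * |t| * (1 + y ^ 2)) := by
        rw [kernelRoot, abs_div, abs_mul, abs_mul, abs_mul, abs_two,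
          abs_of_pos (by positivity : 0 < 1 + y ^ 2)]
    _ ≤ |y| * (4 * t ^ 2 * (1 + y ^ 2)) / (2 * |t| * (1 + y ^ 2)) := by
        gcongr
        exact abs_one_sub_sqrt_one_sub_le (by positivity)
    _ = 2 * |t| * |y| := by
        rw [← sq_abs t]
        field_simp
        norm_num

theorem kernel_kernelRoot_eq_zero (ht : t ≠ 0) (hty : 4 * t ^ 2 * (1 + y ^ 2) ≤ 1) :
    kernel t y (kernelRoot t y) = 0 := by
  have h_sqrt := Real.sq_sqrt (sub_nonneg.2 hty)
  rw [kernel, kernelRoot]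
  field_simp
  linear_combination (-(y ^ 2 + y ^ 4)) * h_sqrt

theorem abs_iterate_kernelRoot_le (t y : ℝ) (n : ℕ) :
    |(kernelRoot t)^[n] y| ≤ (2 * |t|) ^ n * |y| := by
  induction n with
  | zero => simp
  | succ n ih =>
    rw [Function.iterate_succ_apply', pow_succ', mul_assoc]
    exact (abs_kernelRoot_le t _).trans (by gcongr)

theorem hasSum_iterate_kernelRoot (ht0 : t ≠ 0) (ht : |t| < 1 / 3) (hy : |y| ≤ 1) :
    HasSum (fun n ↦ (-1) ^ n * (kernelRoot t)^[n] y * (kernelRoot t)^[n + 1] y)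
      (t * y ^ 2 * walkGF steps t y 0) := by
  have h_iter := abs_iterate_kernelRoot_le t y
  have h_le_one (n : ℕ) : |(kernelRoot t)^[n] y| ≤ 1 :=
    (h_iter n).trans (mul_le_one₀ (pow_le_one₀ (by positivity) (by linarith)) (abs_nonneg y) hy)
  refine hasSum_neg_one_pow_mul_of_kernel_eq_zero (y := fun n ↦ (kernelRoot t)^[n] y)
    (card_steps_mul_lt_one ht) h_le_one ?_ fun n ↦ ?_
  · exact .of_nonneg_of_le (fun n ↦ abs_nonneg _) h_iter
      ((summable_geometric_of_lt_one (by positivity) (by linarith)).mul_right _)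
  · simp only [Function.iterate_succ_apply']
    refine kernel_kernelRoot_eq_zero ht0 ?_
    have h_t_sq : t ^ 2 ≤ (1 / 3) ^ 2 := sq_le_sq' (abs_lt.1 ht).1.le (abs_lt.1 ht).2.le
    have h_y_sq : ((kernelRoot t)^[n] y) ^ 2 ≤ 1 := (sq_le_one_iff_abs_le_one _).2 (h_le_one n)
    calc 4 * t ^ 2 * (1 + ((kernelRoot t)^[n] y) ^ 2) ≤ 4 * (1 / 3) ^ 2 * (1 + 1) := by gcongr
      _ ≤ 1 := by norm_num

end kernelRoot

theorem stmt_6_general (t : ℝ) (ht0 : t ≠ 0) (ht : |t| < 1 / 3) (Y : ℝ → ℝ)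
    (hY : ∀ y, Y y = y * (1 - Real.sqrt (1 - 4 * t ^ 2 * (1 + y ^ 2)))
      / (2 * t * (1 + y ^ 2))) :
    Summable (fun n : ℕ => (numWalks n : ℝ) * t ^ n) ∧
    Summable (fun n : ℕ => (-1 : ℝ) ^ n * Y^[n] 1 * Y^[n + 1] 1) ∧
    (∑' n : ℕ, (numWalks n : ℝ) * t ^ n)
      = (1 - 2 * ∑' n : ℕ, (-1 : ℝ) ^ n * Y^[n] 1 * Y^[n + 1] 1) / (1 - 3 * t) := by
  obtain rfl : Y = kernelRoot t := funext hY
  have ht' : steps.card * ‖t‖ < 1 := card_steps_mul_lt_one ht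
  have h_walks : HasSum (fun n ↦ (numWalks n : ℝ) * t ^ n) (walkGF steps t 1 1) := by
    simpa only [numWalks_eq_card, endpointPoly_one_one] using
      hasSum_walkGF (S := steps) (x := (1 : ℝ)) (y := 1) ht' (by simp) (by simp)
  have h_roots := hasSum_iterate_kernelRoot ht0 ht (y := 1) (by simp)
  have h_kernel := kernel_mul_walkGF (x := 1) (y := 1) ht' (by simp) (by simp)
  refine ⟨h_walks.summable, h_roots.summable, ?_⟩
  rw [h_walks.tsum_eq, h_roots.tsum_eq, eq_div_iff (by linarith [(abs_lt.1 ht).2])]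
  rw [kernel] at h_kernel
  linear_combination h_kernel

theorem stmt_6 (t : ℝ) (ht : 0 < t) (ht3 : t < 1 / 3) (Y : ℝ → ℝ)
    (hY : ∀ y, Y y = y * (1 - Real.sqrt (1 - 4 * t ^ 2 * (1 + y ^ 2)))
      / (2 * t * (1 + y ^ 2))) :
    Summable (fun n : ℕ => (numWalks n : ℝ) * t ^ n) ∧
    Summable (fun n : ℕ => (-1 : ℝ) ^ n * Y^[n] 1 * Y^[n + 1] 1) ∧
    (∑' n : ℕ, (numWalks n : ℝ) * t ^ n)
      = (1 - 2 * ∑' n : ℕ, (-1 : ℝ) ^ n * Y^[n] 1 * Y^[n + 1] 1) / (1 - 3 * t) :=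
  stmt_6_general t ht.ne' ((abs_of_pos ht).trans_lt ht3) Y hY
end
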